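/- Let L̂ : L_p(μ) → ℂ be a continuous m-homogeneous polynomial, m ≥ 2, on a complex L_p(μ) space, and let k ≤ m. Then sup_{‖x‖_p ≤ 1} ‖D̂^k L̂(x)‖ ≤ C_{k,m} ‖L̂‖, where C_{k,m} = k!·m^{m/p}/((m−k)^{(m−k)/p}·k^{k/p}) if 1 ≤ p ≤ m′, C_{k,m} = k!·m^{m/m′}/((m−k)^{(m−k)/m′}·k^{k/m′}) if m′ ≤ p ≤ m, and C_{k,m} = k!·m^{m/p′}/((m−k)^{(m−k)/p′}·k^{k/p′}) if m ≤ p ≤ ∞ (with m′ = m/(m−1), p′ = p/(p−1), and 0⁰ read as 1 when k = m). -/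

import Mathlib

open Metric MeasureTheory
open scoped ENNReal

/-- The conjugate exponent `p' = p/(p-1)` of an extended-real exponent `p`
(with `p' = 1` for `p = ∞`), as a real number. -/
noncomputable def conjExp (p : ℝ≥0∞) : ℝ :=
  if p = ∞ then 1 else p.toReal / (p.toReal - 1)

/-- The Markov constant `C_{k,m} = k! m^{m/r} / ((m-k)^{(m-k)/r} k^{k/r})` with
regime exponent `r` (real powers, so `0⁰ = 1` when `k = m`). -/
noncomputable def markovC (k m : ℕ) (r : ℝ) : ℝ :=
  (k.factorial : ℝ) * (m : ℝ) ^ ((m : ℝ) / r)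
    / (((m : ℝ) - (k : ℝ)) ^ (((m : ℝ) - (k : ℝ)) / r) * (k : ℝ) ^ ((k : ℝ) / r))


lemma aux_l2 (a b c d : ℂ) : ‖(a+b)*c+(a-b)*d‖ ≤
    Real.sqrt (2 * (‖a‖^2+‖b‖^2) * (‖c‖^2+‖d‖^2)) := by
  apply Real.le_sqrt_of_sq_le
  have h1 : ‖(a+b)*c+(a-b)*d‖ ≤ ‖a+b‖*‖c‖+‖a-b‖*‖d‖ := by
    refine (norm_add_le _ _).trans ?_
    rw [norm_mul, norm_mul]
  have h2 := parallelogram_law_with_norm ℝ a b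
  have h3 : 2 * (‖a‖^2+‖b‖^2) = ‖a+b‖^2+‖a-b‖^2 := by nlinarith
  rw [h3]
  calc _ ≤ (‖a+b‖*‖c‖+‖a-b‖*‖d‖)^2 := by gcongr
    _ ≤ _ := by nlinarith [sq_nonneg (‖a+b‖*‖d‖-‖a-b‖*‖c‖)]

lemma aux_l1 (a b c d : ℂ) : ‖(a+b)*c+(a-b)*d‖ ≤ (‖a‖+‖b‖) * (‖c‖+‖d‖) := by
  refine (norm_add_le _ _).trans ?_
  rw [norm_mul, norm_mul, mul_add]
  gcongr
  · exact norm_add_le _ _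
  · exact norm_sub_le _ _

lemma aux_bil (A B C D s : ℝ) (hA : 0 ≤ A) (hB : 0 ≤ B) (hC : 0 ≤ C) (hD : 0 ≤ D)
    (u v w t : ℂ) (hu : ‖u‖ = 1) (hv : ‖v‖ = 1) (hw : ‖w‖ = 1) (ht : ‖t‖ = 1)
    (hs : 1 < s) (hs2 : s ≤ 2) :
    ‖(u*A+v*B)*(w*C)+(u*A-v*B)*(t*D)‖ ≤
      2^(1-1/s) * ((A^s+B^s)*(C^s+D^s))^(1/s) := by
  set P := (A^s+B^s)*(C^s+D^s) with hP
  have hP0 : 0 ≤ P := by positivity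
  let e : ℂ → ℂ := fun z => s*(1-z/2)
  have here (z : ℂ) : (e z).re = s*(1-z.re/2) := by simp [e]
  let G : ℂ → ℂ := fun z => (u*(A:ℂ)^(e z)+v*(B:ℂ)^(e z))*(w*(C:ℂ)^(e z))
    +(u*(A:ℂ)^(e z)-v*(B:ℂ)^(e z))*(t*(D:ℂ)^(e z))
  have hnorm (X : ℝ) (hX : 0 ≤ X) (z : ℂ) (hz : z.re ≤ 1) : ‖(X:ℂ)^(e z)‖ = X^(s*(1-z.re/2)) := by
    rw [Complex.norm_cpow_eq_rpow_re_of_nonneg hX, here]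
    rw [here]; nlinarith
  have hdX (X : ℝ) (z : ℂ) (hz : z.re ≤ 1) : DifferentiableAt ℂ (fun z => (X:ℂ)^(e z)) z := by
    apply DifferentiableAt.const_cpow
    · simp only [e]; fun_prop
    · right; intro h
      have := here z
      rw [h] at this
      simp at this
      rcases this <;> linarith
  have hdG (z : ℂ) (hz : z.re ≤ 1) : DifferentiableAt ℂ G z := by
    have h1 := hdX A z hz
    have h2 := hdX B z hz
    have h3 := hdX C z hz
    have h4 := hdX D z hz
    simp only [G]
    fun_prop
  set θ : ℝ := 2*(1-1/s) with hθ
  have hs1 : 1/s ≤ 1 := by rw [div_le_one] <;> linarith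
  have hs3 : 1/2 ≤ 1/s := by apply one_div_le_one_div_of_le <;> linarith
  have key := Complex.HadamardThreeLines.norm_le_interp_of_mem_verticalClosedStrip₀₁' G
    (z := (θ:ℂ)) (a := P) (b := Real.sqrt (2*P)) ?_ ?_ ?_ ?_ ?_
  · have he : e θ = 1 := by
      simp only [e, hθ]; push_cast
      have : (s:ℂ) ≠ 0 := by exact_mod_cast (by linarith : s ≠ 0)
      field_simp; ring
    simp only [G, he, Complex.cpow_one] at key
    refine key.trans (le_of_eq ?_)
    rw [Complex.ofReal_re, Real.sqrt_eq_rpow, ← Real.rpow_mul (by positivity),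
      Real.mul_rpow (by norm_num) hP0, mul_left_comm, ← Real.rpow_add_of_nonneg hP0]
    · congr 2 <;> rw [hθ] <;> ring
    · rw [hθ]; linarith
    · rw [hθ]; linarith
  · simp only [Complex.HadamardThreeLines.verticalClosedStrip, Set.mem_preimage, Complex.ofReal_re]
    constructor <;> rw [hθ] <;> linarith
  · refine ⟨fun z hz => (hdG z hz.2.le).differentiableWithinAt, fun z hz => ?_⟩
    refine (hdG z ?_).continuousAt.continuousWithinAt
    have : closure (Complex.HadamardThreeLines.verticalStrip 0 1) ⊆ {z | z.re ≤ 1} :=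
      closure_minimal (fun z hz => hz.2.le) (isClosed_le Complex.continuous_re continuous_const)
    exact this hz
  · refine ⟨((1+A)^s+(1+B)^s)*((1+C)^s+(1+D)^s), ?_⟩
    rintro _ ⟨z, hz, rfl⟩
    have hb (X : ℝ) (hX : 0 ≤ X) : ‖(X:ℂ)^(e z)‖ ≤ (1+X)^s := by
      rw [hnorm X hX z hz.2]
      have h0 := hz.1
      have h1 := hz.2
      calc X^(s*(1-z.re/2)) ≤ (1+X)^(s*(1-z.re/2)) := by
            apply Real.rpow_le_rpow hX (by linarith); nlinarith
        _ ≤ _ := by apply Real.rpow_le_rpow_of_exponent_le (by linarith); nlinarith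
    refine (aux_l1 _ _ _ _).trans ?_
    simp only [norm_mul, hu, hv, hw, ht, one_mul]
    gcongr <;> apply hb <;> assumption
  · intro z hz
    have hz : z.re = 0 := hz
    refine (aux_l1 _ _ _ _).trans ?_
    simp only [norm_mul, hu, hv, hw, ht, one_mul]
    rw [hnorm A hA z (by linarith), hnorm B hB z (by linarith), hnorm C hC z (by linarith),
      hnorm D hD z (by linarith), hz]
    simp [hP]
  · intro z hz
    have hz : z.re = 1 := hz
    refine (aux_l2 _ _ _ _).trans ?_
    simp only [norm_mul, hu, hv, hw, ht, one_mul]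
    rw [hnorm A hA z (by linarith), hnorm B hB z (by linarith), hnorm C hC z (by linarith),
      hnorm D hD z (by linarith), hz]
    have hh (X : ℝ) (hX : 0 ≤ X) : (X^(s*(1-1/2)))^2 = X^s := by
      rw [← Real.rpow_natCast, ← Real.rpow_mul hX]; congr 1; push_cast; ring
    rw [hh A hA, hh B hB, hh C hC, hh D hD, hP, mul_assoc]

lemma aux_polar (a : ℂ) : ∃ u : ℂ, ‖u‖ = 1 ∧ a = u * (‖a‖:ℂ) :=
  ⟨Complex.exp (a.arg * Complex.I), Complex.norm_exp_ofReal_mul_I _, by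
    rw [mul_comm, Complex.norm_mul_exp_arg_mul_I]⟩

/-- scalar Clarkson -/
lemma aux_clarkson (a b : ℂ) (q : ℝ) (hq : 2 ≤ q) :
    ‖a+b‖^q+‖a-b‖^q ≤ 2 * (‖a‖^(q/(q-1))+‖b‖^(q/(q-1)))^(q-1) := by
  obtain ⟨u, hu, ha⟩ := aux_polar a
  obtain ⟨v, hv, hb⟩ := aux_polar b
  obtain ⟨w, hw, hc⟩ := aux_polar (a+b)
  obtain ⟨t, ht, hd⟩ := aux_polar (a-b)
  set s := q/(q-1) with hs
  have hq1 : 0 < q - 1 := by linarith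
  have h := aux_bil ‖a‖ ‖b‖ (‖a+b‖^(q-1)) (‖a-b‖^(q-1)) s (norm_nonneg _) (norm_nonneg _)
    (by positivity) (by positivity) u v (starRingEnd ℂ w) (starRingEnd ℂ t) hu hv (by simpa)
    (by simpa) (by rw [hs, lt_div_iff₀ hq1]; linarith) (by rw [hs, div_le_iff₀ hq1]; linarith)
  rw [← ha, ← hb] at h
  have hpow (X : ℝ) (hX : 0 ≤ X) : (X^(q-1))^s = X^q := by
    rw [← Real.rpow_mul hX]; congr 1; rw [hs]; field_simp
  rw [hpow _ (norm_nonneg _), hpow _ (norm_nonneg _)] at h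
  have hcc (z x : ℂ) (hx : ‖x‖ = 1) (hz : z = x * (‖z‖:ℂ)) :
      z * ((starRingEnd ℂ x) * ((‖z‖^(q-1) : ℝ):ℂ)) = ((‖z‖^q : ℝ) : ℂ) := by
    have h1 : x * (starRingEnd ℂ x) = 1 := by rw [Complex.mul_conj']; simp [hx]
    have h2 : ‖z‖^q = ‖z‖ * ‖z‖^(q-1) := by
      rw [← Real.rpow_one_add' (norm_nonneg _) (by linarith)]; congr 1; ring
    rw [h2]; push_cast
    calc _ = (x * (‖z‖:ℂ)) * ((starRingEnd ℂ x) * ((‖z‖^(q-1) : ℝ):ℂ)) := by rw [← hz]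
      _ = (x * (starRingEnd ℂ x)) * (‖z‖ * ((‖z‖^(q-1) : ℝ):ℂ)) := by ring
      _ = _ := by rw [h1, one_mul]
  rw [hcc _ w hw hc, hcc _ t ht hd, ← Complex.ofReal_add, Complex.norm_real,
    Real.norm_of_nonneg (by positivity)] at h
  set R := ‖a+b‖^q+‖a-b‖^q
  set S := ‖a‖^s+‖b‖^s
  have hS : 0 ≤ S := by positivity
  have hR : 0 ≤ R := by positivity
  rcases hR.eq_or_lt with h0 | h0
  · rw [← h0]; positivity
  have e1 : 1 - 1/s = 1/q := by rw [hs]; field_simp; ring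
  have e2 : 1/s = 1 - 1/q := by linarith
  rw [e1, Real.mul_rpow hS hR] at h
  have h4 : R^(1/s) * R^(1/q) = R := by
    rw [e2, ← Real.rpow_add h0]; simp
  have h5 : R^(1/q) ≤ 2^(1/q) * S^(1/s) := by
    have : 0 < R^(1/s) := by positivity
    apply le_of_mul_le_mul_left _ this
    rw [h4]; linarith
  have h6 := Real.rpow_le_rpow (by positivity) h5 (by linarith : 0 ≤ q)
  rw [← Real.rpow_mul hR, Real.mul_rpow (by positivity) (by positivity), ← Real.rpow_mul (by norm_num),
    ← Real.rpow_mul hS, one_div_mul_cancel (by linarith), Real.rpow_one, Real.rpow_one] at h6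
  have e3 : 1/s*q = q-1 := by rw [e2]; field_simp
  rwa [e3] at h6

lemma aux_ofReal {a b c d q : ℝ} {s : ℝ} (ha : 0 ≤ a) (hb : 0 ≤ b) (hc : 0 ≤ c) (hd : 0 ≤ d)
    (hq : 2 ≤ q) (hs : 0 ≤ s) :
    (ENNReal.ofReal a ^ q + ENNReal.ofReal b ^ q ≤
      2 * (ENNReal.ofReal c ^ s + ENNReal.ofReal d ^ s)^(q-1)) ↔
    a^q+b^q ≤ 2 * (c^s+d^s)^(q-1) := by
  have hq0 : 0 ≤ q := by linarith
  have hq1 : 0 ≤ q - 1 := by linarith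
  rw [ENNReal.ofReal_rpow_of_nonneg ha hq0, ENNReal.ofReal_rpow_of_nonneg hb hq0,
    ENNReal.ofReal_rpow_of_nonneg hc hs, ENNReal.ofReal_rpow_of_nonneg hd hs,
    ← ENNReal.ofReal_add (by positivity) (by positivity),
    ← ENNReal.ofReal_add (by positivity) (by positivity),
    ENNReal.ofReal_rpow_of_nonneg (by positivity) hq1,
    show (2:ℝ≥0∞) = ENNReal.ofReal 2 by simp, ← ENNReal.ofReal_mul (by norm_num),
    ENNReal.ofReal_le_ofReal_iff (by positivity)]

lemma aux_clarkson_enn (a b : ℂ) (q : ℝ) (hq : 2 ≤ q) :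
    ‖a+b‖ₑ^q+‖a-b‖ₑ^q ≤ 2 * (‖a‖ₑ^(q/(q-1))+‖b‖ₑ^(q/(q-1)))^(q-1) := by
  simp only [← ofReal_norm]
  rw [aux_ofReal (norm_nonneg _) (norm_nonneg _) (norm_nonneg _) (norm_nonneg _) hq
    (div_nonneg (by linarith) (by linarith))]
  exact aux_clarkson a b q hq

lemma aux_mink {α : Type*} [MeasurableSpace α] (μ : Measure α) (f g : α → ℝ≥0∞)
    (hf : AEMeasurable f μ) (hg : AEMeasurable g μ) (s : ℝ) (hs : 1 ≤ s)
    (hfi : ∫⁻ a, f a ∂μ ≠ ⊤) (hgi : ∫⁻ a, g a ∂μ ≠ ⊤) :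
    (∫⁻ a, f a ∂μ)^s + (∫⁻ a, g a ∂μ)^s ≤ (∫⁻ a, (f a ^ s + g a ^ s)^(1/s) ∂μ)^s := by
  rcases hs.eq_or_lt with h1 | h1
  · subst h1
    simp [lintegral_add_left' hf]
  set A := ∫⁻ a, f a ∂μ
  set B := ∫⁻ a, g a ∂μ
  set K := A^s + B^s with hK
  have hs0 : 0 < s := by linarith
  have hKt : K ≠ ⊤ := by
    simp [hK, hfi, hgi, hs0.le]
  by_cases hK0 : K = 0
  · rw [hK0]; exact zero_le
  have hA (X : ℝ≥0∞) : X * X^(s-1) = X^s := by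
    nth_rewrite 1 [← ENNReal.rpow_one X]
    rw [← ENNReal.rpow_add_of_nonneg _ _ (by norm_num) (by linarith)]; congr 1; ring
  have hconj : s.HolderConjugate (Real.conjExponent s) := Real.HolderConjugate.conjExponent h1
  set s' := Real.conjExponent s
  have hA' (X : ℝ≥0∞) : (X^(s-1))^s' = X^s := by
    rw [← ENNReal.rpow_mul]; congr 1
    exact hconj.sub_one_mul_conj
  have e1 : K = ∫⁻ a, (f a * A^(s-1) + g a * B^(s-1)) ∂μ := by
    rw [lintegral_add_left' (hf.mul_const _), lintegral_mul_const'' _ hf, lintegral_mul_const'' _ hg,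
      hA, hA]
  have e2 : K ≤ (∫⁻ a, (f a ^ s + g a ^ s)^(1/s) ∂μ) * K^(1/s') := by
    calc K = _ := e1
      _ ≤ ∫⁻ a, (f a ^ s + g a ^ s)^(1/s) * K^(1/s') ∂μ := by
        apply lintegral_mono
        intro a
        have := ENNReal.inner_le_Lp_mul_Lq (Finset.univ : Finset (Fin 2)) ![f a, g a]
          ![A^(s-1), B^(s-1)] hconj
        simp only [Fin.sum_univ_two, Matrix.cons_val_zero, Matrix.cons_val_one, hA'] at this
        exact this
      _ = _ := by
        rw [lintegral_mul_const'']
        exact ((hf.pow_const _).add (hg.pow_const _)).pow_const _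
  have e3 : K = K^(1/s) * K^(1/s') := by
    rw [← ENNReal.rpow_add _ _ hK0 hKt]
    have := hconj.inv_add_inv_eq_one
    simp only [one_div]; rw [this, ENNReal.rpow_one]
  have e4 : K^(1/s) ≤ ∫⁻ a, (f a ^ s + g a ^ s)^(1/s) ∂μ := by
    rw [e3] at e2
    have h5 : K^(1/s') ≠ 0 := by simp [ENNReal.rpow_eq_zero_iff, hK0, hKt]
    have h6 : K^(1/s') ≠ ⊤ := by simp [ENNReal.rpow_eq_top_iff, hK0, hKt]
    rw [← e3] at e2
    nth_rewrite 1 [e3] at e2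
    exact (ENNReal.mul_le_mul_iff_left h5 h6).1 e2
  calc K = (K^(1/s))^s := by rw [← ENNReal.rpow_mul]; simp [hs0.ne']
    _ ≤ _ := by gcongr

lemma aux_lp {α : Type*} [MeasurableSpace α] (μ : Measure α) (p : ℝ≥0∞) [Fact (1 ≤ p)]
    (hp : p ≠ ⊤) (q : ℝ) (hq : 2 ≤ q) (h1 : q/(q-1) ≤ p.toReal) (h2 : p.toReal ≤ q)
    (x y : Lp ℂ p μ) :
    ‖x+y‖^q+‖x-y‖^q ≤ 2 * (‖x‖^(q/(q-1))+‖y‖^(q/(q-1)))^(q-1) := by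
  have hq1 : 0 < q - 1 := by linarith
  have hq0 : 0 < q := by linarith
  have hs0 : 0 < q/(q-1) := by positivity
  rw [← aux_ofReal (norm_nonneg _) (norm_nonneg _) (norm_nonneg _) (norm_nonneg _) hq hs0.le]
  simp only [ofReal_norm, Lp.enorm_def]
  have hpz : p ≠ 0 := (lt_of_lt_of_le zero_lt_one (Fact.out : 1 ≤ p)).ne'
  simp only [eLpNorm_eq_lintegral_rpow_enorm_toReal hpz hp]
  set r := p.toReal
  set s := q/(q-1) with hs
  have hr0 : 0 < r := by linarith
  have hx := (Lp.aestronglyMeasurable x).enorm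
  have hy := (Lp.aestronglyMeasurable y).enorm
  have hu := (Lp.aestronglyMeasurable (x+y)).enorm
  have hv := (Lp.aestronglyMeasurable (x-y)).enorm
  have fin (z : Lp ℂ p μ) : ∫⁻ a, ‖z a‖ₑ^r ∂μ ≠ ⊤ :=
    ((eLpNorm_lt_top_iff_lintegral_rpow_enorm_lt_top hpz hp).1 (Lp.memLp z).2).ne
  have hqr : 1 ≤ q/r := by rw [le_div_iff₀ hr0]; linarith
  have M1 := aux_mink μ _ _ (hu.pow_const r) (hv.pow_const r) (q/r) hqr (fin _) (fin _)
  simp only [← ENNReal.rpow_mul] at M1 ⊢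
  have ee : 1/r*q = q/r := by ring
  have ee' : r*(q/r) = q := by field_simp
  rw [ee]
  simp only [ee'] at M1
  refine M1.trans ?_
  have M2 := ENNReal.lintegral_Lp_add_le (μ := μ) (hx.pow_const s) (hy.pow_const s)
    (p := r/s) (by rw [le_div_iff₀ hs0]; linarith)
  simp only [Pi.add_apply, ← ENNReal.rpow_mul] at M2
  have e3 : s*(r/s) = r := by field_simp
  have e4 : 1/(r/s) = 1/r*s := by field_simp
  simp only [e3] at M2
  rw [e4] at M2
  have e5 : ((1/r*s)*(r/s))*(q/r) = q/r := by field_simp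
  have hmeas : AEMeasurable (fun a => (‖x a‖ₑ^s+‖y a‖ₑ^s)^(r/s)) μ :=
    ((hx.pow_const _).add (hy.pow_const _)).pow_const _
  calc _ ≤ (∫⁻ a, (2:ℝ≥0∞)^(r/q) * (‖x a‖ₑ^s+‖y a‖ₑ^s)^(r/s) ∂μ)^(q/r) := by
        refine ENNReal.rpow_le_rpow (lintegral_mono_ae ?_) (by positivity)
        filter_upwards [Lp.coeFn_add x y, Lp.coeFn_sub x y] with a h3 h4
        rw [h3, h4, Pi.add_apply, Pi.sub_apply]
        have := ENNReal.rpow_le_rpow (aux_clarkson_enn (x a) (y a) q hq) (z := 1/(q/r)) (by positivity)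
        refine this.trans (le_of_eq ?_)
        rw [ENNReal.mul_rpow_of_nonneg _ _ (by positivity), ← ENNReal.rpow_mul]
        have e6 : 1/(q/r) = r/q := by field_simp
        have e7 : (q-1)*(1/(q/r)) = r/s := by rw [hs]; field_simp
        rw [e7, e6]
    _ = 2 * ((∫⁻ a, (‖x a‖ₑ^s+‖y a‖ₑ^s)^(r/s) ∂μ)^(1/r*s))^(q-1) := by
        rw [lintegral_const_mul'' _ hmeas,
          ENNReal.mul_rpow_of_nonneg _ _ (by positivity), ← ENNReal.rpow_mul, ← ENNReal.rpow_mul]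
        congr 2
        · rw [show r/q*(q/r) = 1 by field_simp, ENNReal.rpow_one]
        · rw [hs]; field_simp
    _ ≤ _ := by gcongr

lemma aux_pm (A B S q : ℝ) (m : ℕ) (hA : 0 ≤ A) (hB : 0 ≤ B) (hS : 0 ≤ S) (hm : 2 ≤ m)
    (hq : (m:ℝ) ≤ q) (h : A^q+B^q ≤ 2 * S^(q-1)) :
    A^m+B^m ≤ 2 * S^((m:ℝ)/(q/(q-1))) := by
  have hm' : (2:ℝ) ≤ m := by exact_mod_cast hm
  have hq1 : 0 < q - 1 := by linarith
  have hq0 : 0 < q := by linarith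
  have hm0 : (0:ℝ) < m := by linarith
  have hcv := convexOn_rpow (p := q/m) (by rw [le_div_iff₀ hm0]; linarith)
  have hp := hcv.2 (show A^m ∈ Set.Ici (0:ℝ) from Set.mem_Ici.2 (by positivity))
    (show B^m ∈ Set.Ici (0:ℝ) from Set.mem_Ici.2 (by positivity))
    (show (0:ℝ) ≤ 1/2 by norm_num) (show (0:ℝ) ≤ 1/2 by norm_num) (by norm_num)
  simp only [smul_eq_mul] at hp
  have hX (X : ℝ) (hX : 0 ≤ X) : (X^m)^(q/m) = X^q := by
    rw [← Real.rpow_natCast, ← Real.rpow_mul hX]; congr 1; field_simp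
  rw [hX A hA, hX B hB] at hp
  have h2 : (1/2*A^m+1/2*B^m)^(q/m) ≤ S^(q-1) := by linarith
  have h3 := Real.rpow_le_rpow (by positivity) h2 (show 0 ≤ m/q by positivity)
  rw [← Real.rpow_mul (by positivity), ← Real.rpow_mul hS,
    show q/m*(m/q) = 1 by field_simp, Real.rpow_one,
    show (q-1)*(m/q) = m/(q/(q-1)) by field_simp] at h3
  linarith

lemma aux_deriv {E : Type*} [NormedAddCommGroup E] [NormedSpace ℂ E] (F : E → ℂ)
    (hF : ContDiff ℂ ⊤ F) (k : ℕ) (x y : E) :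
    iteratedDeriv k (fun t : ℂ => F (x + t • y)) 0 = iteratedFDeriv ℂ k F x (fun _ => y) := by
  have h1 : (fun t : ℂ => F (x + t • y)) =
      (fun z => F (x + z)) ∘ (ContinuousLinearMap.toSpanSingleton ℂ y) := by
    ext t; simp
  rw [iteratedDeriv_eq_iteratedFDeriv, h1,
    ContinuousLinearMap.iteratedFDeriv_comp_right (n := ⊤) _ (by fun_prop) _ (by exact_mod_cast le_top),
    iteratedFDeriv_comp_add_left]
  simp

lemma aux_cauchy {E : Type*} [NormedAddCommGroup E] [NormedSpace ℂ E] (F : E → ℂ)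
    (hF : ContDiff ℂ ⊤ F) (m k : ℕ) (M : ℝ) (hM : 0 ≤ M) (hb : ∀ u, ‖F u‖ ≤ M * ‖u‖^m) (r : ℝ) (hr : 0 < r)
    (hcl : ∀ x y : E, ‖x+y‖^m+‖x-y‖^m ≤ 2 * (‖x‖^r+‖y‖^r)^((m:ℝ)/r))
    (x y : E) (hx : ‖x‖ ≤ 1) (hy : ‖y‖ ≤ 1) (ρ : ℝ) (hρ : 0 < ρ) :
    ‖iteratedFDeriv ℂ k F x (fun _ => y)‖ ≤
      k.factorial * (M * (1+ρ^r)^((m:ℝ)/r)) / ρ^k := by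
  set g : ℂ → ℂ := fun t => F (x + t • y) with hg
  have hgc : ContDiff ℂ ⊤ g := by fun_prop
  have hgn : ContDiff ℂ ⊤ (fun t => g (-t)) := by fun_prop
  let h : ℂ → ℂ := fun t => (1/2 : ℂ) * (g t + (-1)^k * g (-t))
  have hh : ContDiff ℂ ⊤ h := by fun_prop
  have hd : iteratedDeriv k h 0 = iteratedFDeriv ℂ k F x (fun _ => y) := by
    rw [← aux_deriv F hF]
    simp only [h]
    have c1 : ContDiffAt ℂ k g 0 := hgc.contDiffAt.of_le (by exact_mod_cast le_top)
    have c2 : ContDiffAt ℂ k (fun t => g (-t)) 0 := hgn.contDiffAt.of_le (by exact_mod_cast le_top)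
    rw [iteratedDeriv_const_mul_field, iteratedDeriv_fun_add c1 (contDiffAt_const.mul c2),
      iteratedDeriv_const_mul_field, iteratedDeriv_comp_neg]
    have : ((-1:ℂ)^k) * ((-1:ℂ)^k) = 1 := by rw [← mul_pow]; simp
    rw [smul_eq_mul, ← mul_assoc ((-1:ℂ)^k), this, neg_zero, hg]
    ring
  rw [← hd]
  refine Complex.norm_iteratedDeriv_le_of_forall_mem_sphere_norm_le k hρ
    (hh.differentiable (by simp)).diffContOnCl ?_
  intro t ht
  have ht : ‖t‖ = ρ := by simpa using ht
  have h1 : ‖h t‖ ≤ (1/2) * (‖g t‖ + ‖g (-t)‖) := by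
    simp only [h]
    rw [norm_mul]
    have := norm_add_le (g t) ((-1)^k * g (-t))
    rw [norm_mul ((-1:ℂ)^k), norm_pow, norm_neg, norm_one, one_pow, one_mul] at this
    have e : ‖(1/2:ℂ)‖ = 1/2 := by norm_num
    rw [e]; gcongr
  have h2 : ‖g t‖ ≤ M * ‖x + t • y‖^m := hb _
  have h3 : ‖g (-t)‖ ≤ M * ‖x - t • y‖^m := by
    have := hb (x + (-t) • y)
    rw [neg_smul, ← sub_eq_add_neg] at this
    simpa [hg, sub_eq_add_neg] using this
  have h4 := hcl x (t • y)
  have h5 : (‖x‖^r+‖t • y‖^r)^((m:ℝ)/r) ≤ (1+ρ^r)^((m:ℝ)/r) := by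
    have a1 : ‖x‖^r ≤ 1 := Real.rpow_le_one (norm_nonneg _) hx hr.le
    have a2 : ‖t • y‖ ≤ ρ := by
      rw [norm_smul, ht]; nlinarith
    gcongr
  calc ‖h t‖ ≤ (1/2) * (M * ‖x + t • y‖^m + M * ‖x - t • y‖^m) := by linarith
    _ = M * ((‖x + t • y‖^m + ‖x - t • y‖^m)/2) := by ring
    _ ≤ _ := by gcongr; linarith

lemma aux_const (m k : ℕ) (hm : 2 ≤ m) (hk : k ≤ m) (hk0 : k ≠ 0) (r : ℝ) (hr : 0 < r) (D M : ℝ)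
    (h : ∀ ρ : ℝ, 0 < ρ → D ≤ k.factorial * (M * (1+ρ^r)^((m:ℝ)/r)) / ρ^k) :
    D ≤ markovC k m r * M := by
  have hmp : (0:ℝ) < m := by exact_mod_cast (by omega : 0 < m)
  have hkp : (0:ℝ) < k := by exact_mod_cast (by omega : 0 < k)
  rcases hk.eq_or_lt with rfl | hlt
  · have e : markovC k k r = k.factorial := by
      simp only [markovC, sub_self, zero_div, Real.rpow_zero, one_mul]
      field_simp
    rw [e]
    have hlim : Filter.Tendsto (fun ρ : ℝ => k.factorial * (M * (1+ρ^(-r))^((k:ℝ)/r)))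
        Filter.atTop (nhds (k.factorial * (M * (1+0)^((k:ℝ)/r)))) := by
      refine Filter.Tendsto.const_mul _ (Filter.Tendsto.const_mul _ ?_)
      refine Filter.Tendsto.rpow_const ?_ (Or.inl (by norm_num))
      exact Filter.Tendsto.const_add _ (tendsto_rpow_neg_atTop hr)
    rw [add_zero, Real.one_rpow, mul_one] at hlim
    refine ge_of_tendsto hlim ?_
    filter_upwards [Filter.eventually_gt_atTop 0] with ρ hρ
    refine (h ρ hρ).trans (le_of_eq ?_)
    have : 1+ρ^r = (1+ρ^(-r)) * ρ^r := by
      rw [add_mul, ← Real.rpow_add hρ]; simp [add_comm]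
    rw [this, Real.mul_rpow (by positivity) (by positivity), ← Real.rpow_mul hρ.le,
      show r*(k/r) = k by field_simp, Real.rpow_natCast]
    field_simp
  · have hd : (0:ℝ) < m - k := by
      have : (k:ℝ) < m := by exact_mod_cast hlt
      linarith
    have h1 := h (((k:ℝ)/(m-k))^(1/r)) (by positivity)
    refine h1.trans (le_of_eq ?_)
    rw [← Real.rpow_mul (by positivity), one_div_mul_cancel hr.ne', Real.rpow_one,
      ← Real.rpow_natCast, ← Real.rpow_mul (by positivity),
      show 1 + (k:ℝ)/(m-k) = m/(m-k) by field_simp; ring,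
      Real.div_rpow (by positivity) (by positivity), Real.div_rpow (by positivity) (by positivity),
      markovC, one_div_mul_eq_div]
    have : ((m:ℝ)-k)^((m:ℝ)/r) = ((m:ℝ)-k)^(((m:ℝ)-k)/r) * ((m:ℝ)-k)^((k:ℝ)/r) := by
      rw [← Real.rpow_add hd]; congr 1; ring
    rw [this]
    have b1 : ((m:ℝ)-k)^((k:ℝ)/r) ≠ 0 := by positivity
    have b2 : ((m:ℝ)-k)^(((m:ℝ)-k)/r) ≠ 0 := by positivity
    have b3 : (k:ℝ)^((k:ℝ)/r) ≠ 0 := by positivity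
    field_simp

lemma aux_main {E : Type*} [NormedAddCommGroup E] [NormedSpace ℂ E] (m k : ℕ) (hm : 2 ≤ m)
    (hk : k ≤ m) (F : E → ℂ)
    (L : ContinuousMultilinearMap ℂ (fun _ : Fin m => E) ℂ) (hL : ∀ u, F u = L (fun _ => u))
    (r : ℝ) (hr : 0 < r)
    (hcl : ∀ x y : E, ‖x+y‖^m+‖x-y‖^m ≤ 2 * (‖x‖^r+‖y‖^r)^((m:ℝ)/r)) (x : E) (hx : ‖x‖ ≤ 1) :
    sSup ((fun y => ‖iteratedFDeriv ℂ k F x (fun _ => y)‖) '' closedBall (0 : E) 1)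
          ≤ markovC k m r * sSup ((fun y => ‖F y‖) '' closedBall (0 : E) 1) := by
  set M := sSup ((fun y => ‖F y‖) '' closedBall (0 : E) 1) with hMdef
  have hFc : ContDiff ℂ ⊤ F := by
    have : F = L ∘ (fun u => fun _ => u) := funext hL
    rw [this]
    exact L.contDiff.comp (contDiff_pi.2 fun _ => contDiff_id)
  have hbdd : BddAbove ((fun y => ‖F y‖) '' closedBall (0 : E) 1) := by
    refine ⟨‖L‖, ?_⟩
    rintro _ ⟨y, hy, rfl⟩
    have hy : ‖y‖ ≤ 1 := by simpa using hy
    have := L.le_opNorm (fun _ => y)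
    simp only [hL]
    refine this.trans ?_
    simp only [Finset.prod_const]
    exact mul_le_of_le_one_right (norm_nonneg _) (pow_le_one₀ (norm_nonneg _) hy)
  have hM1 (u : E) (hu : ‖u‖ ≤ 1) : ‖F u‖ ≤ M := le_csSup hbdd ⟨u, by simpa using hu, rfl⟩
  have hM : 0 ≤ M := (norm_nonneg _).trans (hM1 0 (by simp))
  have hhom (c : ℂ) (u : E) : F (c • u) = c^m * F u := by
    rw [hL, hL]
    have := L.map_smul_univ (fun _ => c) (fun _ => u)
    simpa using this
  have hb (u : E) : ‖F u‖ ≤ M * ‖u‖^m := by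
    by_cases hu : u = 0
    · have := hhom 0 u
      rw [zero_smul, zero_pow (by omega), zero_mul] at this
      rw [hu, this]; simp; positivity
    have hu' : 0 < ‖u‖ := norm_pos_iff.2 hu
    have h1 : u = ((‖u‖:ℂ)) • (((‖u‖:ℂ)⁻¹) • u) := by
      rw [smul_smul, mul_inv_cancel₀ (by exact_mod_cast hu'.ne'), one_smul]
    have h2 : ‖((‖u‖:ℂ)⁻¹) • u‖ ≤ 1 := by
      rw [norm_smul, norm_inv, Complex.norm_real, norm_norm, inv_mul_cancel₀ hu'.ne']
    rw [h1, hhom, norm_mul, norm_pow, Complex.norm_real, norm_norm, ← h1, mul_comm]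
    gcongr
    exact hM1 _ h2
  refine csSup_le ⟨_, ⟨0, by simp, rfl⟩⟩ ?_
  rintro _ ⟨y, hy, rfl⟩
  have hy : ‖y‖ ≤ 1 := by simpa using hy
  by_cases hk0 : k = 0
  · subst hk0
    have e : markovC 0 m r = 1 := by
      have : (0:ℝ) < m := by exact_mod_cast (by omega : 0 < m)
      have h0 : (m:ℝ)^((m:ℝ)/r) ≠ 0 := by positivity
      simp [markovC, h0]
    rw [e, one_mul]
    simpa using hM1 x hx
  exact aux_const m k hm hk hk0 r hr _ M fun ρ hρ =>
    aux_cauchy F hFc m k M hM hb r hr hcl x y hx hy ρ hρ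

lemma aux_tri {E : Type*} [NormedAddCommGroup E] (m : ℕ) (x y : E) :
    ‖x+y‖^m+‖x-y‖^m ≤ 2 * (‖x‖^(1:ℝ)+‖y‖^(1:ℝ))^((m:ℝ)/1) := by
  rw [div_one, Real.rpow_natCast, Real.rpow_one, Real.rpow_one]
  have h1 : ‖x+y‖^m ≤ (‖x‖+‖y‖)^m := by gcongr; exact norm_add_le _ _
  have h2 : ‖x-y‖^m ≤ (‖x‖+‖y‖)^m := by gcongr; exact norm_sub_le _ _
  linarith

lemma aux_cl {α : Type*} [MeasurableSpace α] (μ : Measure α) (p : ℝ≥0∞) [Fact (1 ≤ p)]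
    (hp : p ≠ ⊤) (q : ℝ) (m : ℕ) (hm : 2 ≤ m) (hq : (m:ℝ) ≤ q) (h1 : q/(q-1) ≤ p.toReal)
    (h2 : p.toReal ≤ q) (x y : Lp ℂ p μ) :
    ‖x+y‖^m+‖x-y‖^m ≤ 2 * (‖x‖^(q/(q-1))+‖y‖^(q/(q-1)))^((m:ℝ)/(q/(q-1))) := by
  have hm' : (2:ℝ) ≤ m := by exact_mod_cast hm
  exact aux_pm _ _ _ q m (norm_nonneg _) (norm_nonneg _) (by positivity) hm hq
    (aux_lp μ p hp q (by linarith) h1 h2 x y)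

/-- Markov-type inequality for an `m`-homogeneous polynomial on a complex `L_p(μ)` space:
`sup_{‖x‖_p ≤ 1} ‖D̂^k L̂(x)‖ ≤ C_{k,m} ‖L̂‖`, where the constant `C_{k,m}` uses the
regime exponent `p` for `1 ≤ p ≤ m'`, `m' = m/(m-1)` for `m' ≤ p ≤ m`, and
`p' = p/(p-1)` for `m ≤ p ≤ ∞`. -/
theorem markov_homogeneous_Lp_complex
    {α : Type*} [MeasurableSpace α] (μ : Measure α)
    (m k : ℕ) (hm : 2 ≤ m) (hk : k ≤ m) (p : ℝ≥0∞) [Fact (1 ≤ p)]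
    (F : Lp ℂ p μ → ℂ)
    (hF : ∃ L : ContinuousMultilinearMap ℂ (fun _ : Fin m => Lp ℂ p μ) ℂ,
      (∀ (σ : Equiv.Perm (Fin m)) (v : Fin m → Lp ℂ p μ), L (v ∘ σ) = L v) ∧
      ∀ u, F u = L (fun _ => u)) :
    (p ≤ ENNReal.ofReal ((m : ℝ) / ((m : ℝ) - 1)) →
      ∀ x : Lp ℂ p μ, ‖x‖ ≤ 1 →
        sSup ((fun y => ‖iteratedFDeriv ℂ k F x (fun _ => y)‖) '' closedBall (0 : Lp ℂ p μ) 1)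
          ≤ markovC k m p.toReal
              * sSup ((fun y => ‖F y‖) '' closedBall (0 : Lp ℂ p μ) 1)) ∧
    (ENNReal.ofReal ((m : ℝ) / ((m : ℝ) - 1)) ≤ p → p ≤ (m : ℝ≥0∞) →
      ∀ x : Lp ℂ p μ, ‖x‖ ≤ 1 →
        sSup ((fun y => ‖iteratedFDeriv ℂ k F x (fun _ => y)‖) '' closedBall (0 : Lp ℂ p μ) 1)
          ≤ markovC k m ((m : ℝ) / ((m : ℝ) - 1))
              * sSup ((fun y => ‖F y‖) '' closedBall (0 : Lp ℂ p μ) 1)) ∧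
    ((m : ℝ≥0∞) ≤ p →
      ∀ x : Lp ℂ p μ, ‖x‖ ≤ 1 →
        sSup ((fun y => ‖iteratedFDeriv ℂ k F x (fun _ => y)‖) '' closedBall (0 : Lp ℂ p μ) 1)
          ≤ markovC k m (conjExp p)
              * sSup ((fun y => ‖F y‖) '' closedBall (0 : Lp ℂ p μ) 1)) := by
  obtain ⟨L, -, hL⟩ := hF
  have hm' : (2:ℝ) ≤ m := by exact_mod_cast hm
  have hm1 : (0:ℝ) < m - 1 := by linarith
  have hp1 : 1 ≤ p := Fact.out
  refine ⟨fun h => ?_, fun h h' => ?_, fun h => ?_⟩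
  · have hpt : p ≠ ⊤ := (h.trans_lt ENNReal.ofReal_lt_top).ne
    have hr1 : 1 ≤ p.toReal := by
      have := ENNReal.toReal_mono hpt hp1
      simpa using this
    have hr : p.toReal ≤ m/(m-1) := by
      have := ENNReal.toReal_mono ENNReal.ofReal_ne_top h
      rwa [ENNReal.toReal_ofReal (by positivity)] at this
    refine aux_main m k hm hk F L hL p.toReal (by linarith) ?_
    rcases hr1.eq_or_lt with e | e
    · rw [← e]; exact aux_tri m
    · have e0 : 0 < p.toReal - 1 := by linarith
      have hq : (m:ℝ) ≤ p.toReal/(p.toReal-1) := by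
        rw [le_div_iff₀ hm1] at hr
        rw [le_div_iff₀ e0]; linarith
      have hc : (p.toReal/(p.toReal-1))/(p.toReal/(p.toReal-1)-1) = p.toReal := by
        field_simp; ring
      have hr2 : p.toReal ≤ 2 := by
        refine hr.trans ?_
        rw [div_le_iff₀ hm1]; linarith
      have := aux_cl μ p hpt (p.toReal/(p.toReal-1)) m hm hq hc.le (by linarith)
      rwa [hc] at this
  · have hpt : p ≠ ⊤ := (h'.trans_lt (ENNReal.natCast_lt_top m)).ne
    refine aux_main m k hm hk F L hL _ (by positivity) ?_
    refine aux_cl μ p hpt m m hm le_rfl ?_ ?_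
    · exact (ENNReal.ofReal_le_iff_le_toReal hpt).1 h
    · have := ENNReal.toReal_mono (ENNReal.natCast_ne_top m) h'
      simpa using this
  · by_cases hpt : p = ⊤
    · have : conjExp p = 1 := by simp [conjExp, hpt]
      rw [this]
      exact aux_main m k hm hk F L hL _ one_pos (aux_tri m)
    · have : conjExp p = p.toReal/(p.toReal-1) := by simp [conjExp, hpt]
      rw [this]
      have hmp : (m:ℝ) ≤ p.toReal := by
        have := ENNReal.toReal_mono hpt h
        simpa using this
      have e0 : 0 < p.toReal - 1 := by linarith
      refine aux_main m k hm hk F L hL _ (div_pos (by linarith) e0) ?_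
      refine aux_cl μ p hpt p.toReal m hm hmp ?_ le_rfl
      rw [div_le_iff₀ e0]; nlinarith
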